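/- arXiv:1210.7128 — 2 statements merged into one kernel-verified Lean document; each statement's English description precedes it below -/
import Mathlib

section
/- Let n ≥ 2, r ≥ 2, let s = gcd(n, r), and write n = x·s, r = y·s. Then H_S is non-invertible (over ℚ) if and only if both x and y are odd; and if both x and y are odd, then the rank of H_S over ℚ equals nr − s. -/
open Matrix

/-!
Let `A_m` be the `m × m` sign matrix (`0` on the diagonal, `1` above, `-1` below). Since
`A_S = A_r`, the FRT matrix is the Kronecker sum `A_n ⊗ 1 + 1 ⊗ A_r`. If `v ^ m = -1`, then
`(1, v, …, v ^ (m-1))` is an eigenvector of `A_m` with eigenvalue `(1 + v) / (1 - v)`, and the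
`m` roots of `X ^ m + 1` give an invertible (Vandermonde) matrix of eigenvectors. So over `ℂ`
the matrix `H_S` is diagonalizable with eigenvalues
`(1 + v) / (1 - v) + (1 + u⁻¹) / (1 - u⁻¹)` for `v ^ n = -1`, `u ^ r = -1`
(`kroneckerSum_diagonalization`), and such an eigenvalue vanishes iff `v = u`.

Writing `v = exp(πi(2k+1)/n)` and `u = exp(πi(2l+1)/r)` with `k < n`, `l < r`, equality means
`(2k+1) y = (2l+1) x`. As `x` and `y` are coprime, this forces `2k+1 = x t` and `2l+1 = y t`, so
`x`, `y` and `t` are odd (`odd_solution`); when `x` and `y` are odd there are exactly `s`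
admissible values of `t` (`card_solutions`). Rank is unchanged by passing from `ℚ` to `ℂ`
(`rank_map_ratCast`).
-/

/-- Extending scalars from `ℚ` to `ℂ` preserves rank: Gaussian elimination over `ℚ` brings the
matrix to a diagonal form with the same number of nonzero entries over both fields. -/
lemma rank_map_ratCast {m : Type*} [Fintype m] [DecidableEq m] (M : Matrix m m ℚ) :
    (M.map (Rat.castHom ℂ)).rank = M.rank := by
  obtain ⟨L, L', D, h⟩ := Matrix.Pivot.exists_list_transvec_mul_mul_list_transvec_eq_diagonal M
  have hL : IsUnit (L.map TransvectionStruct.toMatrix).prod.det := by simp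
  have hL' : IsUnit (L'.map TransvectionStruct.toMatrix).prod.det := by simp
  generalize (L.map TransvectionStruct.toMatrix).prod = A at h hL
  generalize (L'.map TransvectionStruct.toMatrix).prod = B at h hL'
  have unitMap : ∀ C : Matrix m m ℚ, IsUnit C.det →
      IsUnit (C.map (Rat.castHom ℂ)).det := by
    intro C hC
    have := hC.map (Rat.castHom ℂ)
    rwa [RingHom.map_det] at this
  have h1 : M.rank = (diagonal D).rank := by
    rw [← h, rank_mul_eq_left_of_isUnit_det _ _ hL', rank_mul_eq_right_of_isUnit_det _ _ hL]
  have h2 : (M.map (Rat.castHom ℂ)).rank =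
      (diagonal (fun i => (Rat.castHom ℂ) (D i))).rank := by
    have : A.map (Rat.castHom ℂ) * M.map (Rat.castHom ℂ) * B.map (Rat.castHom ℂ) =
        diagonal (fun i => (Rat.castHom ℂ) (D i)) := by
      rw [← Matrix.map_mul, ← Matrix.map_mul, h, diagonal_map (map_zero _)]
    rw [← this, rank_mul_eq_left_of_isUnit_det _ _ (unitMap B hL'),
      rank_mul_eq_right_of_isUnit_det _ _ (unitMap A hL)]
  rw [h1, h2, rank_diagonal, rank_diagonal]
  exact Fintype.card_congr (Equiv.subtypeEquivRight fun i => by simp)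

/-- The sign matrix: `0` on the diagonal, `1` above it and `-1` below it. -/
def signMat (n : ℕ) : Matrix (Fin n) (Fin n) ℂ :=
  .of fun i j => if i = j then 0 else if i < j then 1 else -1

/-- The eigenvector relation for the sign matrix, before `v ^ n = -1` is imposed. -/
lemma sum_sign_pow (v : ℂ) (i n : ℕ) (h : i + 1 ≤ n) :
    (∑ j ∈ Finset.range n, (if i = j then 0 else if i < j then 1 else -1) * v ^ j) * (1 - v) =
      v ^ (i + 1) - v ^ n - 1 + v ^ i := by
  induction n, h using Nat.le_induction with
  | base =>
    have : ∑ j ∈ Finset.range i, (if i = j then (0 : ℂ) else if i < j then 1 else -1) * v ^ j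
        = -∑ j ∈ Finset.range i, v ^ j := by
      rw [← Finset.sum_neg_distrib]
      refine Finset.sum_congr rfl fun j hj => ?_
      rw [Finset.mem_range] at hj
      rw [if_neg (by omega), if_neg (by omega)]
      ring
    rw [Finset.sum_range_succ, this, if_pos rfl]
    linear_combination -(geom_sum_mul_neg v i)
  | succ n hn ih =>
    rw [Finset.sum_range_succ, add_mul, ih, if_neg (by omega), if_pos (by omega)]
    ring

lemma one_sub_ne_zero_of_pow {v : ℂ} {n : ℕ} (h : v ^ n = -1) : 1 - v ≠ 0 := by
  intro h0
  rw [← sub_eq_zero.mp h0, one_pow] at h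
  norm_num at h

/-- The columns of the transposed Vandermonde matrix at roots of `X ^ n + 1` are eigenvectors
of the sign matrix. -/
lemma signMat_mul_vandermonde {n : ℕ} (v : Fin n → ℂ) (hv : ∀ k, v k ^ n = -1) :
    signMat n * (vandermonde v)ᵀ =
      (vandermonde v)ᵀ * diagonal fun k => (1 + v k) / (1 - v k) := by
  ext i k
  have h1 := one_sub_ne_zero_of_pow (hv k)
  have h2 := sum_sign_pow (v k) i n i.2
  rw [← Fin.sum_univ_eq_sum_range
    (fun j => (if (i : ℕ) = j then (0 : ℂ) else if (i : ℕ) < j then 1 else -1) * v k ^ j)] at h2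
  rw [mul_diagonal, mul_apply]
  simp only [signMat, of_apply, transpose_apply, vandermonde_apply, Fin.ext_iff, Fin.lt_def]
  rw [← mul_div_assoc, eq_div_iff h1, h2, hv k]
  ring

open Kronecker in
/-- Simultaneous diagonalization of the Kronecker sum of two sign matrices. -/
lemma kroneckerSum_diagonalization {n r : ℕ} (v : Fin n → ℂ) (u : Fin r → ℂ)
    (hv : ∀ k, v k ^ n = -1) (hu : ∀ k, u k ^ r = -1) :
    (signMat n ⊗ₖ (1 : Matrix (Fin r) (Fin r) ℂ) + (1 : Matrix (Fin n) (Fin n) ℂ) ⊗ₖ signMat r) *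
        ((vandermonde v)ᵀ ⊗ₖ (vandermonde u)ᵀ) =
      ((vandermonde v)ᵀ ⊗ₖ (vandermonde u)ᵀ) * diagonal fun p : Fin n × Fin r =>
        (1 + v p.1) / (1 - v p.1) + (1 + u p.2) / (1 - u p.2) := by
  have hd : (diagonal fun p : Fin n × Fin r =>
        (1 + v p.1) / (1 - v p.1) + (1 + u p.2) / (1 - u p.2)) =
      (diagonal fun k => (1 + v k) / (1 - v k)) ⊗ₖ (1 : Matrix (Fin r) (Fin r) ℂ) +
      (1 : Matrix (Fin n) (Fin n) ℂ) ⊗ₖ (diagonal fun k => (1 + u k) / (1 - u k)) := by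
    rw [← diagonal_one, ← diagonal_one, diagonal_kronecker_diagonal, diagonal_kronecker_diagonal,
      diagonal_add]
    simp
  rw [hd, add_mul, mul_add, ← mul_kronecker_mul, ← mul_kronecker_mul, ← mul_kronecker_mul,
    ← mul_kronecker_mul, signMat_mul_vandermonde v hv, signMat_mul_vandermonde u hu]
  simp

/-- The roots `exp(πi(2k+1)/n)` of `X ^ n + 1`. -/
noncomputable def negRoot (n k : ℕ) : ℂ :=
  Complex.exp ((2 * k + 1) / n * (Real.pi * Complex.I))

lemma negRoot_pow {n : ℕ} (hn : n ≠ 0) (k : ℕ) : negRoot n k ^ n = -1 := by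
  have hn' : (n : ℂ) ≠ 0 := by exact_mod_cast hn
  rw [negRoot, ← Complex.exp_nat_mul]
  have : (n : ℂ) * ((2 * k + 1) / n * (Real.pi * Complex.I)) =
      k * (2 * Real.pi * Complex.I) + Real.pi * Complex.I := by
    field_simp
  rw [this, Complex.exp_add, Complex.exp_nat_mul_two_pi_mul_I, Complex.exp_pi_mul_I, one_mul]

/-- The angles of the roots lie in `(0, 2π)`, so equal roots have equal angles. -/
lemma negRoot_eq_iff {n r k l : ℕ} (hk : k < n) (hl : l < r) :
    negRoot n k = negRoot r l ↔ (2 * k + 1) * r = (2 * l + 1) * n := by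
  have hn : (n : ℂ) ≠ 0 := by exact_mod_cast (by omega : n ≠ 0)
  have hr : (r : ℂ) ≠ 0 := by exact_mod_cast (by omega : r ≠ 0)
  have hpi : (Real.pi : ℂ) * Complex.I ≠ 0 :=
    mul_ne_zero (by exact_mod_cast Real.pi_ne_zero) Complex.I_ne_zero
  rw [negRoot, negRoot, Complex.exp_eq_exp_iff_exists_int]
  constructor
  · rintro ⟨z, hz⟩
    have h1 : ((2 * k + 1) / n : ℂ) = (2 * l + 1) / r + 2 * z :=
      mul_right_cancel₀ hpi (by linear_combination hz)
    have h2 : ((2 * k + 1) * r : ℂ) = (2 * l + 1) * n + 2 * z * (n * r) := by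
      field_simp at h1
      linear_combination h1
    have h3 : ((2 * k + 1) * r : ℤ) = (2 * l + 1) * n + 2 * z * (n * r) := by exact_mod_cast h2
    have hk' : (k : ℤ) + 1 ≤ n := by exact_mod_cast hk
    have hl' : (l : ℤ) + 1 ≤ r := by exact_mod_cast hl
    have hn0 : (0 : ℤ) < n := by omega
    have hr0 : (0 : ℤ) < r := by omega
    have hnr : (0 : ℤ) < n * r := by positivity
    have hA : (2 * k + 1 : ℤ) * r < 2 * (n * r) := by nlinarith
    have hB : (2 * l + 1 : ℤ) * n < 2 * (n * r) := by nlinarith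
    have hA0 : (0 : ℤ) < (2 * k + 1) * r := by positivity
    have hB0 : (0 : ℤ) < (2 * l + 1) * n := by positivity
    have hz1 : z < 1 := by by_contra! h; nlinarith
    have hz2 : -1 < z := by by_contra! h; nlinarith
    obtain rfl : z = 0 := by omega
    have h4 : ((2 * k + 1) * r : ℤ) = (2 * l + 1) * n := by linarith
    exact_mod_cast h4
  · intro h
    refine ⟨0, ?_⟩
    have h' : ((2 * k + 1) * r : ℂ) = (2 * l + 1) * n := by exact_mod_cast h
    have : ((2 * k + 1) / n : ℂ) = (2 * l + 1) / r := by
      rw [div_eq_div_iff hn hr, h']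
    rw [this]
    simp

lemma negRoot_injective {n : ℕ} : Function.Injective fun k : Fin n => negRoot n k := by
  intro k l h
  have h' := Nat.eq_of_mul_eq_mul_right k.pos ((negRoot_eq_iff k.2 l.2).mp h)
  exact Fin.ext (by omega)

/-- A sum of two Cayley transforms vanishes exactly when the arguments are mutually inverse. -/
lemma cayley_add_eq_zero_iff {a b : ℂ} (ha : 1 - a ≠ 0) (hb : 1 - b⁻¹ ≠ 0) (hb0 : b ≠ 0) :
    (1 + a) / (1 - a) + (1 + b⁻¹) / (1 - b⁻¹) = 0 ↔ a = b := by
  rw [div_add_div _ _ ha hb, div_eq_zero_iff, or_iff_left (mul_ne_zero ha hb)]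
  have : (1 + a) * (1 - b⁻¹) + (1 - a) * (1 + b⁻¹) = 2 * b⁻¹ * (b - a) := by
    field_simp
    ring
  rw [this, mul_eq_zero, or_iff_right (by simpa using hb0), sub_eq_zero, eq_comm]

/-- Solutions of `(2k+1) y = (2l+1) x` for coprime `x, y`: both are odd, and `2k+1 = x (2m+1)`,
`2l+1 = y (2m+1)`. -/
lemma odd_solution {x y k l : ℕ} (hc : Nat.Coprime x y)
    (h : (2 * k + 1) * y = (2 * l + 1) * x) :
    (Odd x ∧ Odd y) ∧ ∃ m, 2 * k + 1 = x * (2 * m + 1) ∧ 2 * l + 1 = y * (2 * m + 1) := by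
  have hx : x ∣ 2 * k + 1 := hc.dvd_of_dvd_mul_right (h ▸ Dvd.intro_left _ rfl)
  obtain ⟨t, ht⟩ := hx
  have hodd : Odd (x * t) := ht ▸ odd_two_mul_add_one k
  obtain ⟨hxo, m, rfl⟩ := Nat.odd_mul.mp hodd
  have h2 : 2 * l + 1 = y * (2 * m + 1) := by
    apply Nat.eq_of_mul_eq_mul_right hxo.pos
    rw [← h, ht]
    ring
  have hyo : Odd (y * (2 * m + 1)) := h2 ▸ odd_two_mul_add_one l
  exact ⟨⟨hxo, (Nat.odd_mul.mp hyo).1⟩, m, ht, h2⟩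

/-- For odd coprime `x, y`, the parameter `m` of `odd_solution` ranges over `Fin s`. -/
lemma card_solutions {x y s : ℕ} (hc : Nat.Coprime x y) (hx : Odd x) (hy : Odd y) :
    Fintype.card {p : Fin (x * s) × Fin (y * s) //
      (2 * (p.1 : ℕ) + 1) * y = (2 * (p.2 : ℕ) + 1) * x} = s := by
  obtain ⟨a, rfl⟩ := hx
  obtain ⟨b, rfl⟩ := hy
  have bound : ∀ c m : ℕ, m < s → (2 * c + 1) * m + c < (2 * c + 1) * s := by
    intro c m hm
    have := Nat.mul_le_mul_left (2 * c + 1) hm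
    rw [Nat.mul_succ] at this
    omega
  let f : Fin s → {p : Fin ((2 * a + 1) * s) × Fin ((2 * b + 1) * s) //
      (2 * (p.1 : ℕ) + 1) * (2 * b + 1) = (2 * (p.2 : ℕ) + 1) * (2 * a + 1)} := fun m =>
    ⟨(⟨(2 * a + 1) * m + a, bound a m m.2⟩, ⟨(2 * b + 1) * m + b, bound b m m.2⟩), by
      dsimp only; ring⟩
  have hf : Function.Bijective f := by
    constructor
    · intro m m' h
      have h1 : (2 * a + 1) * (m : ℕ) + a = (2 * a + 1) * m' + a :=
        congrArg (fun q => (q.1.1 : ℕ)) h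
      exact Fin.ext (Nat.eq_of_mul_eq_mul_left (by omega) (Nat.add_right_cancel h1))
    · rintro ⟨⟨k, l⟩, h⟩
      obtain ⟨-, m, hk, hl⟩ := odd_solution hc h
      have hk' : (k : ℕ) = (2 * a + 1) * m + a := by linarith
      have hl' : (l : ℕ) = (2 * b + 1) * m + b := by linarith
      have hm : m < s := by
        have h1 := k.2
        rw [hk'] at h1
        exact lt_of_mul_lt_mul_left (lt_of_le_of_lt (Nat.le_add_right _ _) h1) (Nat.zero_le _)
      exact ⟨⟨m, hm⟩, Subtype.ext (Prod.ext (Fin.ext hk'.symm) (Fin.ext hl'.symm))⟩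
  simpa using (Fintype.card_of_bijective hf).symm

/-- with `s = gcd(n,r)`, `n = x·s`, `r = y·s`, the FRT matrix `H_S`
is non-invertible iff both `x` and `y` are odd, in which case its rank is `nr - s`. -/
theorem stmt_4 (n r x y s : ℕ) (hn : 2 ≤ n) (hr : 2 ≤ r)
    (hs : s = Nat.gcd n r) (hx : n = x * s) (hy : r = y * s)
    (Nr Mr : Matrix (Fin r) (Fin r) ℚ)
    (hNr : ∀ i j : Fin r, Nr i j = if i ≤ j then -1 else 0)
    (hMr : Mr = -Nrᵀ)
    (HS : Matrix (Fin n × Fin r) (Fin n × Fin r) ℚ)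
    (hHS : ∀ (α β : Fin n) (j k : Fin r), HS (α, j) (β, k) =
      if α = β then (-(Mr + Nr)) j k
      else if α < β then (1 : Matrix (Fin r) (Fin r) ℚ) j k
      else (-1 : Matrix (Fin r) (Fin r) ℚ) j k) :
    (¬ IsUnit HS.det ↔ Odd x ∧ Odd y) ∧
    (Odd x → Odd y → HS.rank = n * r - s) := by
  have hs0 : 0 < s := hs ▸ Nat.gcd_pos_of_pos_left _ (by omega)
  have hc : Nat.Coprime x y := by
    have h : s * Nat.gcd x y = s * 1 := by
      rw [← Nat.gcd_mul_left, mul_comm s x, mul_comm s y, ← hx, ← hy, ← hs, mul_one]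
    exact Nat.eq_of_mul_eq_mul_left hs0 h
  have hH : HS.map (Rat.castHom ℂ) =
      kroneckerMap (· * ·) (signMat n) (1 : Matrix (Fin r) (Fin r) ℂ) +
        kroneckerMap (· * ·) (1 : Matrix (Fin n) (Fin n) ℂ) (signMat r) := by
    ext ⟨α, j⟩ ⟨β, k⟩
    have h1 := lt_trichotomy j k
    simp only [map_apply, hHS, hMr, Matrix.add_apply, Matrix.neg_apply, transpose_apply, hNr,
      kroneckerMap_apply, signMat, of_apply, one_apply]
    rcases h1 with h1 | rfl | h1
    · by_cases hab : α = β <;> simp [hab, h1.ne, h1, h1.le, h1.not_ge]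
    · by_cases hab : α = β
      · simp [hab]
      · by_cases hlt : α < β <;> simp [hab, hlt]
    · by_cases hab : α = β <;> simp [hab, h1.ne', h1.le, h1.not_ge, h1.not_gt]
  -- Inverses are taken on the second factor so that vanishing eigenvalues match equal roots.
  let v : Fin n → ℂ := fun k => negRoot n k
  let u : Fin r → ℂ := fun l => (negRoot r l)⁻¹
  have hv : ∀ k, v k ^ n = -1 := fun k => negRoot_pow (by omega) k
  have hu : ∀ l, u l ^ r = -1 := fun l => by
    simp only [u, inv_pow, negRoot_pow (show r ≠ 0 by omega)]
    norm_num
  let d : Fin n × Fin r → ℂ := fun p =>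
    (1 + v p.1) / (1 - v p.1) + (1 + u p.2) / (1 - u p.2)
  have hd : ∀ p, d p = 0 ↔ (2 * (p.1 : ℕ) + 1) * y = (2 * (p.2 : ℕ) + 1) * x := by
    intro p
    have h1 : d p = 0 ↔ negRoot n p.1 = negRoot r p.2 :=
      cayley_add_eq_zero_iff (one_sub_ne_zero_of_pow (hv p.1)) (one_sub_ne_zero_of_pow (hu p.2))
        (Complex.exp_ne_zero _)
    rw [h1, negRoot_eq_iff p.1.2 p.2.2]
    constructor
    · intro h
      apply Nat.eq_of_mul_eq_mul_right hs0
      rw [mul_assoc, mul_assoc, ← hx, ← hy, h]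
    · intro h
      calc (2 * (p.1 : ℕ) + 1) * r = (2 * (p.1 : ℕ) + 1) * y * s := by rw [mul_assoc, ← hy]
        _ = (2 * (p.2 : ℕ) + 1) * n := by rw [h, mul_assoc, ← hx]
  have hdiag := kroneckerSum_diagonalization v u hv hu
  rw [← hH] at hdiag
  change _ = _ * diagonal d at hdiag
  have hP : IsUnit (kroneckerMap (· * ·) (vandermonde v)ᵀ (vandermonde u)ᵀ).det := by
    rw [det_kronecker, det_transpose, det_transpose]
    refine isUnit_iff_ne_zero.mpr (mul_ne_zero (pow_ne_zero _ ?_) (pow_ne_zero _ ?_))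
    · exact det_vandermonde_ne_zero_iff.mpr negRoot_injective
    · exact det_vandermonde_ne_zero_iff.mpr (inv_injective.comp negRoot_injective)
  generalize kroneckerMap (· * ·) (vandermonde v)ᵀ (vandermonde u)ᵀ = P at hdiag hP
  have hrank : HS.rank = Fintype.card {p // d p ≠ 0} := by
    rw [← rank_map_ratCast, ← rank_mul_eq_left_of_isUnit_det P _ hP, hdiag,
      rank_mul_eq_right_of_isUnit_det _ _ hP, rank_diagonal]
  have hdet : (HS.det : ℂ) = ∏ p, d p := by
    have h1 := congrArg det hdiag
    rw [det_mul, det_mul, mul_comm, det_diagonal] at h1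
    have h2 := hP.mul_left_cancel h1
    rw [← h2]
    exact RingHom.map_det (Rat.castHom ℂ) HS
  have hcard : Odd x → Odd y → Fintype.card {p // d p = 0} = s := by
    intro hxo hyo
    rw [Fintype.card_congr (Equiv.subtypeEquivRight hd)]
    clear_value d
    subst hx hy
    convert card_solutions hc hxo hyo
  refine ⟨?_, ?_⟩
  · have h1 : ¬ IsUnit HS.det ↔ ∃ p, d p = 0 := by
      rw [isUnit_iff_ne_zero, not_not, ← Rat.cast_eq_zero (α := ℂ), hdet, Finset.prod_eq_zero_iff]
      simp
    rw [h1]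
    constructor
    · rintro ⟨p, hp⟩
      exact (odd_solution hc ((hd p).mp hp)).1
    · rintro ⟨hxo, hyo⟩
      have h2 : 0 < Fintype.card {p // d p = 0} := by rw [hcard hxo hyo]; exact hs0
      obtain ⟨p⟩ := Fintype.card_pos_iff.mp h2
      exact ⟨p.1, p.2⟩
  · intro hxo hyo
    rw [hrank, Fintype.card_subtype_compl, hcard hxo hyo]
    simp
end

section
/- Let n ≥ 2, r ≥ 2, and let s = gcd(n, r). Let H_P be the (nr + r + n)×(nr + r + n) skew-symmetric integer matrix defined blockwise as follows, with block rows/columns indexed by α = 1, …, n (each of size r), one further index n+1 of size r, and one further index n+2 of size n: the block in position (α, β) for α, β ≤ n equals 0 if α = β, 2·M_r if α < β, and 2·N_r if α > β; the block (α, n+1) equals I_r and the block (n+1, α) equals −I_r for α ≤ n; the block (α, n+2) equals Ê_α and the block (n+2, α) equals −Ê_αᵗ for α ≤ n, where Ê_α is the r×n matrix with (Ê_α)_{t,i} = 1 if i = α and 0 otherwise; and the blocks (n+1,n+1), (n+1,n+2), (n+2,n+1), (n+2,n+2) are all zero. Then (n−1)(r−1) − s + 1 is even and there exists an integer matrix U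 of the same size with det U = 1 such that U·H_P·Uᵗ is block diagonal consisting of: (n+r−1) diagonal 2×2 blocks equal to [[0,1],[−1,0]], ((n−1)(r−1) − s + 1)/2 diagonal 2×2 blocks equal to [[0,2],[−2,0]], and an (s+1)×(s+1) zero block. -/
/-!
Regard `H_P` as an alternating form on vectors consisting of an array `x` (coordinates along the
matrix generators `(α, t)`), column coordinates and row coordinates. The value of the form at `x` and
a column or row operator is a column or row sum of `x`. Hence the column operators together with all
row operators but one belong to `n + r - 1` hyperbolic pairs. Everything orthogonal to these operators
has an array with vanishing row and column sums (the omitted row sum follows from the others), and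
there the form takes even values. So `n + r - 1` blocks `[[0, 1], [-1, 0]]` split off and the rest is
even (`hasNormalForm_of_family`). By the symplectic basis algorithm, an even alternating form whose
nonzero elementary divisors all divide `2` is a sum of blocks `[[0, 2], [-2, 0]]` and its radical
(`hasNormalForm_even`). What remains is to bound the elementary divisors and to compute the radical.

Both rest on one computation. The mixed second difference of `2 * halfPairing x`, the pairing of the
array `x` with `(β, u)`, is twice the difference of `x` along a diagonal (`halfPairing_mixed`), while
row and column coordinates do not contribute to it. Suppose `d` divides all pairings of `v`. Then,
modulo `d`, the array of `2 * v` is constant along diagonals and has vanishing row and column sums.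
The vanishing sums force constancy also along diagonals that wrap around the rectangle
(`wrap_of_diag`), so the array is `g (β - u)` with `g` periodic modulo `s = gcd n r`. Since `n / s`
and `r / s` are coprime, `g` has sum zero over a period (`exists_periodic_of_diag`), and it can be
chosen as an integral function with this property (`exists_periodic_of_diag_dvd`).
Conversely, every such integral `g` is realized in the radical, with one column coordinate free
(`exists_mem_ker`). For `d ≠ 0`, subtracting such an element of the radical from `2 * v` leaves `d` times
a vector, so the elementary divisors divide `2` (`genForm_divisorsDvdTwo`). For `d = 0` the radical is
seen to have rank `(s - 1) + 1 = s` (`finrank_ker_genForm`).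

Counting ranks gives the number of blocks with entries `±2` and in particular the parity claim. Since
`s ≥ 1`, the last basis vector is in the radical, and changing its sign makes the determinant `1`.
-/

open Matrix

/-! ### Normal forms of alternating forms -/

/-- `B` has, in some basis indexed by `Fin N`, the block diagonal matrix whose `2 × 2` blocks are
`[[0, w k], [-w k, 0]]` in rows `k, k + 1` for `k` even. Only the values `w k` with `k` even and
`k + 1 < N` matter. -/
def HasNormalForm {R V : Type} [CommRing R] [AddCommGroup V] [Module R V]
    (B : LinearMap.BilinForm R V) (N : ℕ) (w : ℕ → R) : Prop :=
  ∃ b : Module.Basis (Fin N) R V, ∀ i j : Fin N, B (b i) (b j) =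
    if (i : ℕ) + 1 = (j : ℕ) ∧ Even (i : ℕ) then w i
    else if (j : ℕ) + 1 = (i : ℕ) ∧ Even (j : ℕ) then -w j
    else 0

/-- The orthogonal complement of the pair `x, y`. -/
def pairPerp {R V : Type} [CommRing R] [AddCommGroup V] [Module R V] (B : LinearMap.BilinForm R V)
    (x y : V) : Submodule R V :=
  LinearMap.ker (B x) ⊓ LinearMap.ker (B y)

/-- All nonzero elementary divisors of `B` divide `2`, expressed without a basis: whenever the
functional `B v` is divisible by `d`, twice its quotient by `d` is again of the form `B v'`. -/
def DivisorsDvdTwo {R V : Type} [CommRing R] [AddCommGroup V] [Module R V]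
    (B : LinearMap.BilinForm R V) : Prop :=
  ∀ (v : V) (d : R), (∀ x, d ∣ B v x) → ∃ v', ∀ x, 2 * B v x = d * B v' x

section Peel

variable {R V : Type} [CommRing R] [AddCommGroup V] [Module R V] {B : LinearMap.BilinForm R V}

lemma mem_pairPerp {x y v : V} : v ∈ pairPerp B x y ↔ B x v = 0 ∧ B y v = 0 := by
  simp [pairPerp]

lemma swap_of_alt (hB : ∀ v, B v v = 0) (v w : V) : B v w = -B w v := by
  have h := hB (v + w)
  simp only [map_add, LinearMap.add_apply, hB] at h
  refine eq_neg_of_add_eq_zero_left ?_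
  linear_combination h

lemma left_pairPerp (hB : ∀ v, B v v = 0) {x y v : V} (hv : v ∈ pairPerp B x y) :
    B v x = 0 ∧ B v y = 0 := by
  obtain ⟨h1, h2⟩ := mem_pairPerp.1 hv
  rw [swap_of_alt hB v x, swap_of_alt hB v y, h1, h2]
  simp

/-- The decomposition of a vector along `x`, `y` and their complement; the divisibility of `B x` and
`B y` by `c = B x y` makes the coefficients lie in `R`. -/
lemma exists_proj (hB : ∀ v, B v v = 0) {x y : V} {c : R} (hc : B x y = c)
    (hx : ∀ v, c ∣ B x v) (hy : ∀ v, c ∣ B y v) (v : V) :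
    ∃ a b : R, ∃ v' ∈ pairPerp B x y, v = a • x + b • y + v' := by
  obtain ⟨β, hβ⟩ := hx v
  obtain ⟨γ, hγ⟩ := hy v
  refine ⟨-γ, β, v + γ • x - β • y, ?_, by rw [neg_smul]; abel⟩
  rw [mem_pairPerp]
  have hyx : B y x = -c := by rw [swap_of_alt hB, hc]
  constructor
  · simp [hB, hc, hβ]; ring
  · simp [hB, hyx, hγ]; ring

/-- A basis of the complement of a pair extends by the pair to a basis of `V`. -/
lemma exists_basis_of_pairPerp [IsDomain R] (hB : ∀ v, B v v = 0) {x y : V} {c : R} (hc : B x y = c)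
    (hc0 : c ≠ 0) (hx : ∀ v, c ∣ B x v) (hy : ∀ v, c ∣ B y v) {N : ℕ}
    (b : Module.Basis (Fin N) R (pairPerp B x y)) :
    ∃ b2 : Module.Basis (Fin (N + 2)) R V,
      b2 0 = x ∧ b2 1 = y ∧ ∀ i : Fin N, b2 i.succ.succ = b i := by
  have hyx : B y x = -c := by rw [swap_of_alt hB, hc]
  let b1 : Module.Basis (Fin (N + 1)) R (LinearMap.ker (B y)) :=
    Module.Basis.mkFinConsOfLE y (by simp [hB]) b inf_le_right
      (by
        intro a v hv h
        have := congrArg (B x) h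
        simpa [hc, hc0, (mem_pairPerp.1 hv).1] using this)
      (by
        intro z hz
        obtain ⟨β, hβ⟩ := hx z
        refine ⟨-β, ?_⟩
        rw [mem_pairPerp]
        simp [hc, hβ, hB, LinearMap.mem_ker.1 hz, mul_comm])
  have hb1 : ⇑b1 = Fin.cons ⟨y, by simp [hB]⟩ (Submodule.inclusion inf_le_right ∘ b) :=
    Module.Basis.coe_mkFinConsOfLE _ _ _ _ _ _
  let b2 : Module.Basis (Fin (N + 2)) R V :=
    Module.Basis.mkFinCons x b1
      (by
        intro a v hv h
        have := congrArg (B y) h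
        simpa [hyx, hc0, LinearMap.mem_ker.1 hv] using this)
      (by
        intro z
        obtain ⟨γ, hγ⟩ := hy z
        refine ⟨γ, ?_⟩
        rw [LinearMap.mem_ker]
        simp [hyx, hγ, mul_comm])
  have hb2 : ⇑b2 = Fin.cons x ((↑) ∘ b1) := Module.Basis.coe_mkFinCons _ _ _ _
  refine ⟨b2, ?_, ?_, ?_⟩
  · rw [hb2]; rfl
  · rw [hb2, hb1]; rfl
  · intro i; rw [hb2, hb1]; rfl

/-- Splitting off one block: `V` is the orthogonal sum of the span of `x, y` and the complement. -/
lemma HasNormalForm.peel [IsDomain R] (hB : ∀ v, B v v = 0) {x y : V} {c : R} (hc : B x y = c)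
    (hc0 : c ≠ 0) (hx : ∀ v, c ∣ B x v) (hy : ∀ v, c ∣ B y v) {N : ℕ} {w : ℕ → R} (hw : w 0 = c)
    (h : HasNormalForm (B.restrict (pairPerp B x y)) N (fun k => w (k + 2))) :
    HasNormalForm B (N + 2) w := by
  obtain ⟨b, hb⟩ := h
  have hyx : B y x = -c := by rw [swap_of_alt hB, hc]
  obtain ⟨b2, e0, e1, e2⟩ := exists_basis_of_pairPerp hB hc hc0 hx hy b
  have p1 : ∀ i, B x (b i) = 0 := fun i => (mem_pairPerp.1 (b i).2).1
  have p2 : ∀ i, B y (b i) = 0 := fun i => (mem_pairPerp.1 (b i).2).2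
  have p3 : ∀ i, B (b i) x = 0 := fun i => (left_pairPerp hB (b i).2).1
  have p4 : ∀ i, B (b i) y = 0 := fun i => (left_pairPerp hB (b i).2).2
  refine ⟨b2, fun i j => ?_⟩
  have key : ∀ i : Fin (N + 2), i = 0 ∨ i = 1 ∨ ∃ k : Fin N, i = k.succ.succ := by
    intro i
    refine Fin.cases (Or.inl rfl) (fun i => ?_) i
    refine Fin.cases (Or.inr (Or.inl rfl)) (fun k => Or.inr (Or.inr ⟨k, rfl⟩)) i
  rcases key i with rfl | rfl | ⟨k, rfl⟩ <;> rcases key j with rfl | rfl | ⟨l, rfl⟩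
  · simp [e0, hB]
  · simp [e0, e1, hc, hw]
  · simp [e0, e2, p1]
  · simp [e0, e1, hyx, hw]
  · simp [e1, hB]
  · simp [e1, e2, p2]
  · simp [e0, e2, p3]
  · simp [e1, e2, p4]
  · rw [e2, e2]
    have := hb k l
    rw [LinearMap.BilinForm.restrict_apply] at this
    simp only [LinearMap.domRestrict_apply] at this
    rw [this]
    simp [Nat.even_add]

lemma finrank_ker_restrict (hB : ∀ v, B v v = 0) {x y : V} {c : R} (hc : B x y = c)
    (hx : ∀ v, c ∣ B x v) (hy : ∀ v, c ∣ B y v) :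
    Module.finrank R (LinearMap.ker (B.restrict (pairPerp B x y))) =
      Module.finrank R (LinearMap.ker B) := by
  rw [← Submodule.finrank_map_subtype_eq]
  suffices h : (LinearMap.ker (B.restrict (pairPerp B x y))).map (pairPerp B x y).subtype =
      LinearMap.ker B by rw [h]
  ext v
  simp only [Submodule.mem_map, LinearMap.mem_ker, Submodule.subtype_apply, Subtype.exists,
    exists_and_right, exists_eq_right]
  constructor
  · rintro ⟨hv, h⟩
    ext u
    obtain ⟨a, b, u', hu', rfl⟩ := exists_proj hB hc hx hy u
    have h' : B v u' = 0 := congrArg (fun f => f ⟨u', hu'⟩) h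
    simp [(left_pairPerp hB hv).1, (left_pairPerp hB hv).2, h']
  · intro h
    refine ⟨?_, ?_⟩
    · rw [mem_pairPerp, swap_of_alt hB x, swap_of_alt hB y, h]; simp
    · ext u
      simp [LinearMap.BilinForm.restrict_apply, h]

lemma DivisorsDvdTwo.restrict (h : DivisorsDvdTwo B) (hB : ∀ v, B v v = 0) {x y : V} {c : R}
    (hc : B x y = c) (hx : ∀ v, c ∣ B x v) (hy : ∀ v, c ∣ B y v) :
    DivisorsDvdTwo (B.restrict (pairPerp B x y)) := by
  rintro ⟨v, hv⟩ d hd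
  obtain ⟨v', h'⟩ := h v d (by
    intro u
    obtain ⟨a, b, u', hu', rfl⟩ := exists_proj hB hc hx hy u
    have : d ∣ B v u' := hd ⟨u', hu'⟩
    simpa [(left_pairPerp hB hv).1, (left_pairPerp hB hv).2] using this)
  obtain ⟨a, b, v'', hv'', rfl⟩ := exists_proj hB hc hx hy v'
  refine ⟨⟨v'', hv''⟩, fun ⟨u, hu⟩ => ?_⟩
  have := h' u
  simpa [(mem_pairPerp.1 hu).1, (mem_pairPerp.1 hu).2] using this

end Peel

/-- An even alternating form over a principal ideal domain whose elementary divisors divide `2` is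
an orthogonal sum of blocks `[[0, 2], [-2, 0]]` and its radical. -/
lemma hasNormalForm_even {R : Type} [CommRing R] [IsDomain R]
    [IsPrincipalIdealRing R] [CharZero R] (k : ℕ) : ∀ (V : Type) [AddCommGroup V] [Module R V]
    [Module.Free R V] [Module.Finite R V] (B : LinearMap.BilinForm R V), Module.finrank R V ≤ k →
    (∀ v, B v v = 0) → (∀ v w, 2 ∣ B v w) → DivisorsDvdTwo B →
    ∃ g, HasNormalForm B (2 * g + Module.finrank R (LinearMap.ker B))
      (fun k => if k < 2 * g then 2 else 0) := by
  induction k using Nat.strong_induction_on with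
  | _ k ih =>
  intro V _ _ _ _ B hk hB h2 hdiv
  by_cases h0 : B = 0
  · subst h0
    refine ⟨0, Module.finBasisOfFinrankEq R V ?_, by simp⟩
    rw [LinearMap.ker_zero, finrank_top, mul_zero, zero_add]
  · obtain ⟨v, hv⟩ : ∃ v, B v ≠ 0 := by
      by_contra! h
      exact h0 (LinearMap.ext h)
    -- `d` generates the ideal of values of `B v`
    obtain ⟨d, hd⟩ := IsPrincipalIdealRing.principal (LinearMap.range (B v))
    obtain ⟨u, hu⟩ : d ∈ LinearMap.range (B v) := by
      rw [hd]; exact Submodule.mem_span_singleton_self d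
    have hdd : ∀ x, d ∣ B v x := by
      intro x
      have : B v x ∈ Submodule.span R {d} := hd ▸ LinearMap.mem_range_self _ x
      obtain ⟨a, ha⟩ := Submodule.mem_span_singleton.1 this
      exact ⟨a, by rw [← ha, smul_eq_mul, mul_comm]⟩
    have hd0 : d ≠ 0 := by
      rintro rfl
      exact hv (LinearMap.ext fun x => by simpa using hdd x)
    obtain ⟨v', hv'⟩ := hdiv v d hdd
    have hxy : B v' u = 2 := by
      have := hv' u
      rw [hu, mul_comm] at this
      exact (mul_left_cancel₀ hd0 this).symm
    have hlt : Module.finrank R (pairPerp B v' u) < Module.finrank R V := by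
      obtain ⟨b, -⟩ := exists_basis_of_pairPerp hB hxy two_ne_zero (h2 _) (h2 _)
        (Module.finBasis R (pairPerp B v' u))
      rw [Module.finrank_eq_card_basis b, Fintype.card_fin]
      omega
    obtain ⟨g, hg⟩ := ih _ (hlt.trans_le hk) (pairPerp B v' u) (B.restrict _) le_rfl
      (fun w => hB w) (fun _ _ => h2 _ _) (hdiv.restrict hB hxy (h2 _) (h2 _))
    rw [finrank_ker_restrict hB hxy (h2 _) (h2 _)] at hg
    refine ⟨g + 1, ?_⟩
    have := HasNormalForm.peel hB hxy two_ne_zero (h2 _) (h2 _)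
      (w := fun k => if k < 2 * (g + 1) then 2 else 0) (by simp) (N := _) (by
        simp only [show ∀ k, k + 2 < 2 * (g + 1) ↔ k < 2 * g by omega]
        exact hg)
    convert this using 1
    ring

/-- A family of `m` hyperbolic pairs `x i, y i` with isotropic `y`-part can be split off, as long as
the form is even on the orthogonal complement of the `y i`. -/
lemma hasNormalForm_of_family {R : Type} [CommRing R] [IsDomain R]
    [IsPrincipalIdealRing R] [CharZero R] (m : ℕ) : ∀ (V : Type) [AddCommGroup V] [Module R V]
    [Module.Free R V] [Module.Finite R V] (B : LinearMap.BilinForm R V) (x y : Fin m → V),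
    (∀ v, B v v = 0) → (∀ i j, B (x i) (y j) = if i = j then 1 else 0) →
    (∀ i j, B (y i) (y j) = 0) →
    (∀ v w, (∀ i, B v (y i) = 0) → (∀ i, B w (y i) = 0) → 2 ∣ B v w) → DivisorsDvdTwo B →
    ∃ g, HasNormalForm B (2 * m + 2 * g + Module.finrank R (LinearMap.ker B))
      (fun k => if k < 2 * m then 1 else if k < 2 * m + 2 * g then 2 else 0) := by
  induction m with
  | zero =>
    intro V _ _ _ _ B x y hB hxy hyy h2 hdiv
    simpa using hasNormalForm_even _ V B le_rfl hB
      (fun v w => h2 v w (fun i => i.elim0) (fun i => i.elim0)) hdiv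
  | succ m ih =>
    intro V _ _ _ _ B x y hB hxy hyy h2 hdiv
    have h1 : B (x 0) (y 0) = 1 := by simp [hxy]
    have hyP : ∀ j : Fin m, y j.succ ∈ pairPerp B (x 0) (y 0) := fun j =>
      mem_pairPerp.2 ⟨by simp [hxy, Ne.symm (Fin.succ_ne_zero j)], hyy _ _⟩
    choose a b x' hx' hxx using fun i : Fin m =>
      exists_proj hB h1 (fun _ => one_dvd _) (fun _ => one_dvd _) (x i.succ)
    obtain ⟨g, hg⟩ := ih (pairPerp B (x 0) (y 0)) (B.restrict _) (fun i => ⟨x' i, hx' i⟩)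
      (fun j => ⟨y j.succ, hyP j⟩) (fun w => hB w)
      (by
        intro i j
        have := hxy i.succ j.succ
        rw [hxx] at this
        simpa [(mem_pairPerp.1 (hyP j)).1, (mem_pairPerp.1 (hyP j)).2] using this)
      (fun i j => hyy _ _)
      (by
        rintro ⟨v, hv⟩ ⟨w, hw⟩ hv' hw'
        refine h2 v w (Fin.cases ?_ hv') (Fin.cases ?_ hw')
        · exact (left_pairPerp hB hv).2
        · exact (left_pairPerp hB hw).2)
      (hdiv.restrict hB h1 (fun _ => one_dvd _) (fun _ => one_dvd _))
    rw [finrank_ker_restrict hB h1 (fun _ => one_dvd _) (fun _ => one_dvd _)] at hg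
    refine ⟨g, ?_⟩
    have := HasNormalForm.peel hB h1 one_ne_zero (fun _ => one_dvd _) (fun _ => one_dvd _)
      (w := fun k => if k < 2 * (m + 1) then 1 else if k < 2 * (m + 1) + 2 * g then 2 else 0)
      (by simp) (by
        simp only [show ∀ k, k + 2 < 2 * (m + 1) ↔ k < 2 * m by omega,
          show ∀ k, k + 2 < 2 * (m + 1) + 2 * g ↔ k < 2 * m + 2 * g by omega]
        exact hg)
    convert this using 1
    ring

/-! ### Arrays that are constant along cyclic diagonals -/

section Periodic

variable {A : Type} [AddCommGroup A]

lemma sum_range_add_of_periodic {g : ℤ → A} {R : ℕ} (hg : Function.Periodic g R) (c : ℤ) :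
    ∑ k ∈ Finset.range R, g (c + k) = ∑ k ∈ Finset.range R, g k := by
  have step : ∀ c : ℤ, ∑ k ∈ Finset.range R, g (c + 1 + k) = ∑ k ∈ Finset.range R, g (c + k) := by
    intro c
    have h1 := Finset.sum_range_succ (fun k : ℕ => g (c + k)) R
    have h2 := Finset.sum_range_succ' (fun k : ℕ => g (c + k)) R
    rw [h1] at h2
    simp only [hg c, Nat.cast_zero, add_zero, add_left_inj, Nat.cast_add, Nat.cast_one] at h2
    rw [h2]
    exact Finset.sum_congr rfl fun k _ => by congr 1; ring
  induction c with
  | zero => simp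
  | succ c ih => rw [step, ih]
  | pred c ih => rw [← ih, ← step]; simp

lemma sum_range_mul_of_periodic {g : ℤ → A} {s : ℕ} (hg : Function.Periodic g s) (q : ℕ) (c : ℤ) :
    ∑ k ∈ Finset.range (s * q), g (c + k) = q • ∑ k ∈ Finset.range s, g k := by
  induction q with
  | zero => simp
  | succ q ih =>
    rw [mul_add, mul_one, Finset.sum_range_add, ih, succ_nsmul]
    congr 1
    rw [← sum_range_add_of_periodic hg (c + (s * q : ℕ))]
    exact Finset.sum_congr rfl fun k _ => by congr 1; push_cast; ring

/-- Column sums of the array `g (β - u)`. -/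
lemma sum_fin_sub_right {g : ℤ → A} {s : ℕ} (hg : Function.Periodic g s) (q R : ℕ)
    (hR : R = s * q) (c : ℤ) :
    ∑ k : Fin R, g ((k : ℕ) - c) = q • ∑ k ∈ Finset.range s, g k := by
  subst hR
  rw [Fin.sum_univ_eq_sum_range (fun k : ℕ => g (k - c)), ← sum_range_mul_of_periodic hg q (-c)]
  exact Finset.sum_congr rfl fun k _ => by congr 1; ring

/-- Row sums of the array `g (β - u)`. -/
lemma sum_fin_sub_left {g : ℤ → A} {s : ℕ} (hg : Function.Periodic g s) (q R : ℕ)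
    (hR : R = s * q) (c : ℤ) :
    ∑ k : Fin R, g (c - (k : ℕ)) = q • ∑ k ∈ Finset.range s, g k := by
  subst hR
  rw [Fin.sum_univ_eq_sum_range (fun k : ℕ => g (c - k)), ← Finset.sum_range_reflect,
    ← sum_range_mul_of_periodic hg q (c + 1 - (s * q : ℕ))]
  refine Finset.sum_congr rfl fun k hk => ?_
  have := Finset.mem_range.1 hk
  congr 1
  omega

/-- An array with vanishing row and column sums that is constant along all diagonals that stay
inside the rectangle is also constant along the diagonals that wrap around cyclically. -/
lemma wrap_of_diag {n r : ℕ} (y : Fin (n + 1) → Fin (r + 1) → A)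
    (hd : ∀ (i : Fin n) (j : Fin r), y i.succ j.succ = y i.castSucc j.castSucc)
    (hrow : ∀ i, ∑ j, y i j = 0) (hcol : ∀ j, ∑ i, y i j = 0) (i : Fin (n + 1)) (j : Fin (r + 1)) :
    y (i + 1) (j + 1) = y i j := by
  have h1 : ∀ i : Fin n, y i.succ 0 = y i.castSucc (Fin.last r) := by
    intro i
    have e1 := hrow i.succ
    have e2 := hrow i.castSucc
    rw [Fin.sum_univ_succ] at e1
    rw [Fin.sum_univ_castSucc] at e2
    simp only [hd] at e1
    rw [add_comm] at e2
    exact add_right_cancel (e1.trans e2.symm)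
  have h2 : ∀ j : Fin r, y 0 j.succ = y (Fin.last n) j.castSucc := by
    intro j
    have e1 := hcol j.succ
    have e2 := hcol j.castSucc
    rw [Fin.sum_univ_succ] at e1
    rw [Fin.sum_univ_castSucc] at e2
    simp only [hd] at e1
    rw [add_comm] at e2
    exact add_right_cancel (e1.trans e2.symm)
  have h3 : y 0 0 = y (Fin.last n) (Fin.last r) := by
    have e1 := hcol 0
    have e2 := hcol (Fin.last r)
    rw [Fin.sum_univ_succ] at e1
    rw [Fin.sum_univ_castSucc] at e2
    simp only [h1] at e1
    rw [add_comm] at e2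
    exact add_right_cancel (e1.trans e2.symm)
  induction i using Fin.lastCases with
  | last =>
    rw [Fin.last_add_one]
    induction j using Fin.lastCases with
    | last => rw [Fin.last_add_one, h3]
    | cast j => rw [Fin.coeSucc_eq_succ, h2]
  | cast i =>
    rw [Fin.coeSucc_eq_succ]
    induction j using Fin.lastCases with
    | last => rw [Fin.last_add_one, h1]
    | cast j => rw [Fin.coeSucc_eq_succ, hd]

/-- Arrays with vanishing row and column sums that are constant along diagonals are of the form
`g (β - u)` with `g` periodic modulo `gcd (n + 1) (r + 1)` and of vanishing sum over a period. -/
lemma exists_periodic_of_diag {n r : ℕ} (y : Fin (n + 1) → Fin (r + 1) → A)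
    (hd : ∀ (i : Fin n) (j : Fin r), y i.succ j.succ = y i.castSucc j.castSucc)
    (hrow : ∀ i, ∑ j, y i j = 0) (hcol : ∀ j, ∑ i, y i j = 0) :
    ∃ g : ℤ → A, Function.Periodic g (Nat.gcd (n + 1) (r + 1) : ℕ) ∧
      (∀ i j, y i j = g ((i : ℕ) - (j : ℕ))) ∧
      ∑ k ∈ Finset.range (Nat.gcd (n + 1) (r + 1)), g k = 0 := by
  have hw := wrap_of_diag y hd hrow hcol
  -- extend `y` to a doubly periodic function on `ℤ × ℤ`
  let Y : ℤ → ℤ → A := fun a b => y (a : ZMod (n + 1)) (b : ZMod (r + 1))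
  have hY1 : ∀ a b, Y (a + 1) (b + 1) = Y a b := by
    intro a b
    have := hw (a : ZMod (n + 1)) (b : ZMod (r + 1))
    simp only [Y, Int.cast_add, Int.cast_one]
    exact this
  have hYn : ∀ a b, Y (a + (n + 1 : ℕ)) b = Y a b := by
    intro a b
    simp only [Y]
    rw [Int.cast_add, Int.cast_natCast, ZMod.natCast_self, add_zero]
  have hYr : ∀ a b, Y a (b + (r + 1 : ℕ)) = Y a b := by
    intro a b
    simp only [Y]
    rw [Int.cast_add, Int.cast_natCast, ZMod.natCast_self, add_zero]
  have hdiag : ∀ a b, Y a b = Y (a - b) 0 := by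
    have hshift : ∀ b a : ℤ, Y (a + b) b = Y a 0 := by
      intro b
      induction b with
      | zero => simp
      | succ c ih => intro a; rw [← ih, ← hY1 (a + c)]; congr 1; ring
      | pred c ih => intro a; rw [← ih, ← hY1 (a + (-c - 1))]; congr 1 <;> ring
    intro a b
    rw [← hshift b, sub_add_cancel]
  let g : ℤ → A := fun k => Y k 0
  have gn : Function.Periodic g (n + 1 : ℕ) := fun k => hYn k 0
  have gr : Function.Periodic g (r + 1 : ℕ) := by
    intro k
    simp only [g]
    rw [← hYr (k + (r + 1 : ℕ)), hdiag]
    congr 1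
    ring
  have gs : Function.Periodic g (Nat.gcd (n + 1) (r + 1) : ℕ) := by
    rw [← Int.gcd_natCast_natCast, Int.gcd_eq_gcd_ab, mul_comm, mul_comm ((r + 1 : ℕ) : ℤ)]
    exact (gn.int_mul _).add_period (gr.int_mul _)
  have hy : ∀ i j, y i j = g ((i : ℕ) - (j : ℕ)) := by
    intro i j
    simp only [g]
    rw [← hdiag]
    simp only [Y, Int.cast_natCast]
    have e1 : (((i : ℕ) : ZMod (n + 1))) = i := Fin.cast_val_eq_self i
    have e2 : (((j : ℕ) : ZMod (r + 1))) = j := Fin.cast_val_eq_self j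
    rw [e1, e2]
  refine ⟨g, gs, hy, ?_⟩
  set s := Nat.gcd (n + 1) (r + 1) with hs
  obtain ⟨p, hp⟩ : s ∣ n + 1 := Nat.gcd_dvd_left _ _
  obtain ⟨q, hq⟩ : s ∣ r + 1 := Nat.gcd_dvd_right _ _
  have h1 := hcol 0
  have h2 := hrow 0
  simp only [hy] at h1 h2
  rw [sum_fin_sub_right gs p _ hp] at h1
  rw [sum_fin_sub_left gs q _ hq] at h2
  -- the multiplicities `p` and `q` are coprime
  have hs0 : 0 < s := Nat.gcd_pos_of_pos_left _ (Nat.succ_pos n)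
  have hcop : Nat.gcd p q = 1 := by
    have : s * Nat.gcd p q = s * 1 := by
      rw [← Nat.gcd_mul_left, ← hp, ← hq, mul_one]
    exact Nat.eq_of_mul_eq_mul_left hs0 this
  have hb := Nat.gcd_eq_gcd_ab p q
  rw [hcop] at hb
  rw [← one_zsmul (∑ k ∈ Finset.range s, g k), ← Nat.cast_one, hb, add_zsmul, mul_comm, mul_zsmul,
    mul_comm (q : ℤ), mul_zsmul, natCast_zsmul, natCast_zsmul, h1, h2]
  simp

/-- The congruence version of `exists_periodic_of_diag`, with `g` integral and of sum exactly `0`. -/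
lemma exists_periodic_of_diag_dvd {n r : ℕ} (d : ℤ) (y : Fin (n + 1) → Fin (r + 1) → ℤ)
    (hd : ∀ (i : Fin n) (j : Fin r), d ∣ y i.succ j.succ - y i.castSucc j.castSucc)
    (hrow : ∀ i, d ∣ ∑ j, y i j) (hcol : ∀ j, d ∣ ∑ i, y i j) :
    ∃ g : ℤ → ℤ, Function.Periodic g (Nat.gcd (n + 1) (r + 1) : ℕ) ∧
      (∀ i j, d ∣ y i j - g ((i : ℕ) - (j : ℕ))) ∧
      ∑ k ∈ Finset.range (Nat.gcd (n + 1) (r + 1)), g k = 0 := by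
  have hz : ∀ a : ℤ, (a : ZMod d.natAbs) = 0 ↔ d ∣ a := fun a => by
    rw [ZMod.intCast_zmod_eq_zero_iff_dvd, Int.natAbs_dvd]
  obtain ⟨G, hG, hyG, hsum⟩ := exists_periodic_of_diag (A := ZMod d.natAbs)
    (fun i j => (y i j : ZMod d.natAbs))
    (fun i j => by rw [← sub_eq_zero, ← Int.cast_sub, hz]; exact hd i j)
    (fun i => by rw [← Int.cast_sum, hz]; exact hrow i)
    (fun j => by rw [← Int.cast_sum, hz]; exact hcol j)
  set s := Nat.gcd (n + 1) (r + 1) with hs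
  have hs0 : 0 < s := Nat.gcd_pos_of_pos_left _ (Nat.succ_pos n)
  choose sec hsec using ZMod.intCast_surjective (n := d.natAbs)
  have hmod : ∀ k : ℤ, G (k % s) = G k := by
    intro k
    have := hG.int_mul (k / s) (k % s)
    rw [← this]
    congr 1
    rw [Int.cast_id, mul_comm, Int.emod_add_mul_ediv]
  -- the lifted values sum to a multiple of `d`, which is removed from the value at `0`
  set σ := ∑ k ∈ Finset.range s, sec (G k) with hσ
  have hσd : d ∣ σ := by
    rw [← hz, hσ, Int.cast_sum]
    simpa [hsec] using hsum
  refine ⟨fun k => sec (G (k % s)) - if k % s = 0 then σ else 0, ?_, ?_, ?_⟩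
  · intro k; simp
  · intro i j
    rw [← sub_add]
    refine dvd_add ?_ ?_
    · rw [← hz, Int.cast_sub, hsec, hmod, hyG, sub_self]
    · split_ifs
      · exact hσd
      · exact dvd_zero _
  · have hk : ∀ k ∈ Finset.range s,
        (sec (G ((k : ℤ) % s)) - if (k : ℤ) % s = 0 then σ else 0) =
          sec (G k) - if k = 0 then σ else 0 := by
      intro k hk
      rw [Int.emod_eq_of_lt (by positivity) (by exact_mod_cast Finset.mem_range.1 hk)]
      simp
    rw [Finset.sum_congr rfl hk, Finset.sum_sub_distrib, ← hσ, Finset.sum_ite_eq']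
    simp [hs0]

end Periodic

/-! ### The form defined by `H_P` -/

/-- The index set of the generators: matrix generators `(α, t)`, column operators, row operators.
The parameters are shifted by one: there are `n + 1` blocks of size `r + 1`. -/
abbrev Gen (n r : ℕ) : Type := (Fin (n + 1) × Fin (r + 1)) ⊕ (Fin (r + 1) ⊕ Fin (n + 1))

/-- The matrix `H_P` indexed by `Gen n r`. -/
def genMatrix (n r : ℕ) : Matrix (Gen n r) (Gen n r) ℤ
  | .inl (α, t), .inl (β, u) =>
      2 * ((if α < β ∧ u ≤ t then 1 else 0) - (if β < α ∧ t ≤ u then 1 else 0))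
  | .inl (_, t), .inr (.inl u) => if t = u then 1 else 0
  | .inl (α, _), .inr (.inr i) => if α = i then 1 else 0
  | .inr (.inl u), .inl (_, t) => if t = u then -1 else 0
  | .inr (.inr i), .inl (α, _) => if α = i then -1 else 0
  | .inr _, .inr _ => 0

/-- The alternating form with matrix `H_P`. -/
noncomputable def genForm (n r : ℕ) : LinearMap.BilinForm ℤ (Gen n r → ℤ) :=
  Matrix.toBilin' (genMatrix n r)

/-- Half of the pairing of the array `x` with the generator `(β, u)`. -/
def halfPairing {n r : ℕ} (x : Fin (n + 1) → Fin (r + 1) → ℤ) (β : Fin (n + 1))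
    (u : Fin (r + 1)) : ℤ :=
  ∑ α, ∑ t, x α t * ((if α < β ∧ u ≤ t then 1 else 0) - (if β < α ∧ t ≤ u then 1 else 0))

/-- The part of a vector supported on the matrix generators. -/
def arr {n r : ℕ} (v : Gen n r → ℤ) : Fin (n + 1) → Fin (r + 1) → ℤ := fun α t => v (.inl (α, t))

section Form

variable {n r : ℕ}

lemma genForm_apply (v w : Gen n r → ℤ) :
    genForm n r v w =
      ∑ β, ∑ u, (2 * halfPairing (arr v) β u - v (.inr (.inl u)) - v (.inr (.inr β))) *
        w (.inl (β, u)) +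
      (∑ u, (∑ α, arr v α u) * w (.inr (.inl u)) + ∑ i, (∑ t, arr v i t) * w (.inr (.inr i))) := by
  rw [genForm, Matrix.toBilin'_apply', Matrix.dotProduct_mulVec]
  simp only [dotProduct, Fintype.sum_sum_type, Fintype.sum_prod_type, Matrix.vecMul, genMatrix,
    halfPairing, arr, mul_zero, Finset.sum_const_zero, add_zero]
  congr 1
  · refine Finset.sum_congr rfl fun β _ => Finset.sum_congr rfl fun u _ => ?_
    congr 1
    simp only [mul_ite, mul_neg, mul_one, mul_zero, Finset.sum_ite_eq, Finset.mem_univ, if_true]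
    rw [Finset.mul_sum, sub_sub, sub_eq_add_neg, neg_add]
    congr 1
    refine Finset.sum_congr rfl fun α _ => ?_
    rw [Finset.mul_sum]
    refine Finset.sum_congr rfl fun t _ => ?_
    ring
  · congr 1
    · refine Finset.sum_congr rfl fun u _ => ?_
      simp
    · refine Finset.sum_congr rfl fun i _ => ?_
      congr 1
      rw [Finset.sum_eq_single i (by intro b _ hb; simp [hb]) (by simp)]
      simp

lemma genForm_single_inl (v : Gen n r → ℤ) (β : Fin (n + 1)) (u : Fin (r + 1)) :
    genForm n r v (Pi.single (.inl (β, u)) 1) =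
      2 * halfPairing (arr v) β u - v (.inr (.inl u)) - v (.inr (.inr β)) := by
  rw [genForm_apply, Finset.sum_eq_single β, Finset.sum_eq_single u]
  · simp
  · intro b _ hb; simp [hb]
  · simp
  · intro b _ hb; simp [hb]
  · simp

lemma genForm_single_col (v : Gen n r → ℤ) (u : Fin (r + 1)) :
    genForm n r v (Pi.single (.inr (.inl u)) 1) = ∑ α, arr v α u := by
  rw [genForm_apply]
  simp [Pi.single_apply]

lemma genForm_single_row (v : Gen n r → ℤ) (i : Fin (n + 1)) :
    genForm n r v (Pi.single (.inr (.inr i)) 1) = ∑ t, arr v i t := by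
  rw [genForm_apply]
  simp [Pi.single_apply]

lemma genMatrix_skew (p q : Gen n r) : genMatrix n r p q = -genMatrix n r q p := by
  rcases p with ⟨α, t⟩ | u | i <;> rcases q with ⟨β, t'⟩ | u' | i' <;> simp [genMatrix]
  · ring
  all_goals split_ifs <;> rfl

lemma genForm_self (v : Gen n r → ℤ) : genForm n r v v = 0 := by
  have h : genForm n r v v = -genForm n r v v := by
    conv_lhs => rw [genForm, Matrix.toBilin'_apply, Finset.sum_comm]
    conv_rhs => rw [genForm, Matrix.toBilin'_apply, ← Finset.sum_neg_distrib]
    refine Finset.sum_congr rfl fun p _ => ?_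
    rw [← Finset.sum_neg_distrib]
    refine Finset.sum_congr rfl fun q _ => ?_
    rw [genMatrix_skew q p]
    ring
  linarith

/-- The mixed second difference of the coefficients of `halfPairing`. -/
lemma mixed_coeff (a b k l : ℕ) :
    (((if a < k ∧ l ≤ b then 1 else 0) - (if k < a ∧ b ≤ l then 1 else 0)) -
      ((if a < k + 1 ∧ l ≤ b then 1 else 0) - (if k + 1 < a ∧ b ≤ l then 1 else 0)) -
      ((if a < k ∧ l + 1 ≤ b then 1 else 0) - (if k < a ∧ b ≤ l + 1 then 1 else 0)) +
      ((if a < k + 1 ∧ l + 1 ≤ b then 1 else 0) - (if k + 1 < a ∧ b ≤ l + 1 then 1 else 0)) : ℤ) =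
    (if a = k + 1 ∧ b = l + 1 then 1 else 0) - (if a = k ∧ b = l then 1 else 0) := by
  have hmul : ∀ (p q : Prop) [Decidable p] [Decidable q],
      (if p ∧ q then 1 else 0 : ℤ) = (if p then 1 else 0) * (if q then 1 else 0) := by
    intro p q _ _
    by_cases p <;> by_cases q <;> simp [*]
  have e1 : (if a < k + 1 then 1 else 0 : ℤ) = (if a < k then 1 else 0) + if a = k then 1 else 0 := by
    split_ifs <;> first | rfl | omega
  have e2 : (if k < a then 1 else 0 : ℤ) =
      (if k + 1 < a then 1 else 0) + if a = k + 1 then 1 else 0 := by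
    split_ifs <;> first | rfl | omega
  have e3 : (if l ≤ b then 1 else 0 : ℤ) = (if l + 1 ≤ b then 1 else 0) + if b = l then 1 else 0 := by
    split_ifs <;> first | rfl | omega
  have e4 : (if b ≤ l + 1 then 1 else 0 : ℤ) =
      (if b ≤ l then 1 else 0) + if b = l + 1 then 1 else 0 := by
    split_ifs <;> first | rfl | omega
  simp only [hmul]
  rw [e1, e2, e3, e4]
  ring

/-- The mixed difference of `halfPairing x` is the difference of `x` along a diagonal. -/
lemma halfPairing_mixed (x : Fin (n + 1) → Fin (r + 1) → ℤ) (i : Fin n) (j : Fin r) :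
    halfPairing x i.castSucc j.castSucc - halfPairing x i.succ j.castSucc
      - halfPairing x i.castSucc j.succ + halfPairing x i.succ j.succ =
    x i.succ j.succ - x i.castSucc j.castSucc := by
  have h : ∀ α t, x α t * ((if α < i.castSucc ∧ j.castSucc ≤ t then 1 else 0)
        - (if i.castSucc < α ∧ t ≤ j.castSucc then 1 else 0))
      - x α t * ((if α < i.succ ∧ j.castSucc ≤ t then 1 else 0)
        - (if i.succ < α ∧ t ≤ j.castSucc then 1 else 0))
      - x α t * ((if α < i.castSucc ∧ j.succ ≤ t then 1 else 0)
        - (if i.castSucc < α ∧ t ≤ j.succ then 1 else 0))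
      + x α t * ((if α < i.succ ∧ j.succ ≤ t then 1 else 0)
        - (if i.succ < α ∧ t ≤ j.succ then 1 else 0)) =
      (if α = i.succ then if t = j.succ then x α t else 0 else 0)
        - (if α = i.castSucc then if t = j.castSucc then x α t else 0 else 0) := by
    intro α t
    have h := mixed_coeff α t i j
    rw [← mul_sub, ← mul_sub, ← mul_add]
    simp only [Fin.lt_def, Fin.le_def, Fin.ext_iff, Fin.val_succ, Fin.val_castSucc]
    rw [h, mul_sub, mul_ite, mul_ite, mul_one, mul_zero, ite_and, ite_and]
  simp only [halfPairing, ← Finset.sum_sub_distrib, ← Finset.sum_add_distrib, h]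
  simp only [Finset.sum_sub_distrib]
  congr 1
  · rw [Finset.sum_eq_single i.succ (by intro b _ hb; simp [hb]) (by simp)]
    simp
  · rw [Finset.sum_eq_single i.castSucc (by intro b _ hb; simp [hb]) (by simp)]
    simp

lemma halfPairing_smul (d : ℤ) (x : Fin (n + 1) → Fin (r + 1) → ℤ) (β : Fin (n + 1))
    (u : Fin (r + 1)) : halfPairing (fun α t => d * x α t) β u = d * halfPairing x β u := by
  simp only [halfPairing, Finset.mul_sum, mul_assoc]

lemma mem_ker_genForm (v : Gen n r → ℤ)
    (h1 : ∀ β u, 2 * halfPairing (arr v) β u = v (.inr (.inl u)) + v (.inr (.inr β)))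
    (h2 : ∀ u, ∑ α, arr v α u = 0) (h3 : ∀ i, ∑ t, arr v i t = 0) : genForm n r v = 0 := by
  ext w
  simp [genForm_apply, h1, h2, h3]

/-- A function of two variables whose mixed differences vanish is a sum of a function of each. -/
lemma separated_of_mixed (F : Fin (n + 1) → Fin (r + 1) → ℤ)
    (h : ∀ (i : Fin n) (j : Fin r), F i.castSucc j.castSucc - F i.succ j.castSucc
      - F i.castSucc j.succ + F i.succ j.succ = 0) (β : Fin (n + 1)) (u : Fin (r + 1)) :
    F β u = F β 0 + F 0 u - F 0 0 := by
  have h1 : ∀ (i : Fin n) u, F i.succ u - F i.castSucc u = F i.succ 0 - F i.castSucc 0 := by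
    intro i u
    induction u using Fin.induction with
    | zero => rfl
    | succ j ih => linarith [h i j]
  induction β using Fin.induction with
  | zero => ring
  | succ i ih => linarith [h1 i u]

/-- Every periodic function of vanishing sum gives an element of the radical, with one free
parameter left. -/
lemma exists_mem_ker (g : ℤ → ℤ) (hg : Function.Periodic g (Nat.gcd (n + 1) (r + 1) : ℕ))
    (hsum : ∑ k ∈ Finset.range (Nat.gcd (n + 1) (r + 1)), g k = 0) (k : ℤ) :
    ∃ v : Gen n r → ℤ, genForm n r v = 0 ∧ (∀ i j, arr v i j = g ((i : ℕ) - (j : ℕ))) ∧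
      v (.inr (.inl 0)) = k := by
  obtain ⟨p, hp⟩ : Nat.gcd (n + 1) (r + 1) ∣ n + 1 := Nat.gcd_dvd_left _ _
  obtain ⟨q, hq⟩ : Nat.gcd (n + 1) (r + 1) ∣ r + 1 := Nat.gcd_dvd_right _ _
  let x : Fin (n + 1) → Fin (r + 1) → ℤ := fun i j => g ((i : ℕ) - (j : ℕ))
  have hsep := separated_of_mixed (halfPairing x) (by
    intro i j
    rw [halfPairing_mixed]
    simp [x])
  let v : Gen n r → ℤ := Sum.elim (fun a => x a.1 a.2)
    (Sum.elim (fun u => 2 * halfPairing x 0 u - 2 * halfPairing x 0 0 + k)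
      (fun β => 2 * halfPairing x β 0 - k))
  have hv : arr v = x := rfl
  refine ⟨v, mem_ker_genForm v ?_ ?_ ?_, fun i j => rfl, ?_⟩
  · intro β u
    rw [hv, hsep β u]
    simp only [v, Sum.elim_inr, Sum.elim_inl]
    ring
  · intro u
    rw [hv]
    simp only [x]
    rw [sum_fin_sub_right hg p _ hp, hsum, smul_zero]
  · intro i
    rw [hv]
    simp only [x]
    rw [sum_fin_sub_left hg q _ hq, hsum, smul_zero]
  · simp [v]

/-- If `d` divides all pairings of `v`, then, modulo `d`, the array of `2 * v` is that of an element
of the radical. -/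
lemma exists_periodic_of_dvd (v : Gen n r → ℤ) (d : ℤ) (hv : ∀ w, d ∣ genForm n r v w) :
    ∃ g : ℤ → ℤ, Function.Periodic g (Nat.gcd (n + 1) (r + 1) : ℕ) ∧
      (∀ i j, d ∣ 2 * arr v i j - g ((i : ℕ) - (j : ℕ))) ∧
      ∑ k ∈ Finset.range (Nat.gcd (n + 1) (r + 1)), g k = 0 := by
  refine exists_periodic_of_diag_dvd d (fun i j => 2 * arr v i j) ?_ ?_ ?_
  · intro i j
    have e := halfPairing_mixed (arr v) i j
    have h := dvd_add (dvd_sub (dvd_sub (hv (Pi.single (.inl (i.castSucc, j.castSucc)) 1))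
      (hv (Pi.single (.inl (i.succ, j.castSucc)) 1)))
      (hv (Pi.single (.inl (i.castSucc, j.succ)) 1))) (hv (Pi.single (.inl (i.succ, j.succ)) 1))
    simp only [genForm_single_inl] at h
    have h' : 2 * arr v i.succ j.succ - 2 * arr v i.castSucc j.castSucc =
        2 * (halfPairing (arr v) i.castSucc j.castSucc - halfPairing (arr v) i.succ j.castSucc
          - halfPairing (arr v) i.castSucc j.succ + halfPairing (arr v) i.succ j.succ) := by
      rw [e]
      ring
    rw [h']
    refine h.trans (dvd_of_eq ?_)
    ring
  · intro i
    rw [← Finset.mul_sum, ← genForm_single_row]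
    exact (hv _).mul_left _
  · intro j
    rw [← Finset.mul_sum, ← genForm_single_col]
    exact (hv _).mul_left _

lemma genForm_divisorsDvdTwo : DivisorsDvdTwo (genForm n r) := by
  intro v d hv
  obtain ⟨g, hg, hvg, hsum⟩ := exists_periodic_of_dvd v d hv
  obtain ⟨v0, hv0, harr, hk⟩ := exists_mem_ker g hg hsum (2 * v (.inr (.inl 0)))
  set w := (2 : ℤ) • v - v0 with hw
  have hwB : genForm n r w = (2 : ℤ) • genForm n r v := by
    rw [hw, map_sub, hv0, map_smul, sub_zero]
  have hwd : ∀ u, d ∣ genForm n r w u := by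
    intro u
    rw [hwB]
    exact (hv u).mul_left _
  have hx : ∀ i j, d ∣ arr w i j := by
    intro i j
    have h := hvg i j
    rw [← harr] at h
    exact h
  have hF : ∀ β u, d ∣ halfPairing (arr w) β u := by
    intro β u
    exact Finset.dvd_sum fun α _ => Finset.dvd_sum fun t _ => (hx α t).mul_right _
  have hcd : ∀ β u, d ∣ w (.inr (.inl u)) + w (.inr (.inr β)) := by
    intro β u
    have h := hwd (Pi.single (.inl (β, u)) 1)
    rw [genForm_single_inl, sub_sub] at h
    exact (dvd_sub_right ((hF β u).mul_left 2)).1 h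
  have hc0 : w (.inr (.inl 0)) = 0 := by
    simp [hw, hk]
  have hrow : ∀ β, d ∣ w (.inr (.inr β)) := by
    intro β
    simpa [hc0] using hcd β 0
  have hcol : ∀ u, d ∣ w (.inr (.inl u)) := by
    intro u
    exact (dvd_add_left (hrow 0)).1 (hcd 0 u)
  have hall : ∀ p, d ∣ w p := by
    rintro (⟨i, j⟩ | u | β)
    exacts [hx i j, hcol u, hrow β]
  choose v' hv' using hall
  have hwv : w = d • v' := funext hv'
  refine ⟨v', fun x => ?_⟩
  have := congrArg (fun f => f x) hwB
  simp only [hwv, map_smul, LinearMap.smul_apply, smul_eq_mul] at this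
  exact this.symm

/-- The radical has rank `gcd (n + 1) (r + 1)`: an element is determined by one column operator
coordinate and by the values of its periodic function other than `g 0`. -/
lemma finrank_ker_genForm :
    Module.finrank ℤ (LinearMap.ker (genForm n r)) = Nat.gcd (n + 1) (r + 1) := by
  set s := Nat.gcd (n + 1) (r + 1) with hs
  have hs0 : 0 < s := Nat.gcd_pos_of_pos_left _ (Nat.succ_pos n)
  have hsn : s ≤ n + 1 := Nat.le_of_dvd (Nat.succ_pos n) (Nat.gcd_dvd_left _ _)
  obtain ⟨S, hS⟩ : ∃ S, s = S + 1 := ⟨s - 1, by omega⟩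
  let idx : Fin s → Gen n r := fun k =>
    if (k : ℕ) = 0 then .inr (.inl 0) else .inl (⟨k, by omega⟩, 0)
  let ρ : LinearMap.ker (genForm n r) →ₗ[ℤ] (Fin s → ℤ) :=
    (LinearMap.funLeft ℤ ℤ idx).comp (Submodule.subtype _)
  have hρ0 : ∀ v (k : Fin s), (k : ℕ) = 0 → ρ v k = v.1 (.inr (.inl 0)) := by
    intro v k hk
    simp [ρ, idx, hk, LinearMap.funLeft_apply]
  have hρ1 : ∀ v (k : Fin s), (k : ℕ) ≠ 0 → ρ v k = v.1 (.inl (⟨k, by omega⟩, 0)) := by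
    intro v k hk
    simp [ρ, idx, hk, LinearMap.funLeft_apply]
  have hbij : Function.Bijective ρ := by
    constructor
    · rw [← LinearMap.ker_eq_bot, LinearMap.ker_eq_bot']
      rintro ⟨v, hv'⟩ h
      have hv : genForm n r v = 0 := LinearMap.mem_ker.1 hv'
      obtain ⟨g, hg, hvg, hsum⟩ := exists_periodic_of_dvd v 0 (by simp [hv])
      rw [← hs] at hg hsum
      simp only [zero_dvd_iff, sub_eq_zero] at hvg
      have hgk : ∀ k ∈ Finset.range s, k ≠ 0 → g k = 0 := by
        intro k hk hk0
        have hk := Finset.mem_range.1 hk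
        have e1 := hvg ⟨k, by omega⟩ 0
        have e2 : v (.inl (⟨k, by omega⟩, 0)) = 0 := by
          have := hρ1 ⟨v, hv'⟩ ⟨k, hk⟩ hk0
          rw [h] at this
          exact this.symm
        simp only [arr, e2, Fin.val_zero, Nat.cast_zero, sub_zero, mul_zero] at e1
        exact e1.symm
      have hg0 : g 0 = 0 := by
        rw [Finset.sum_eq_single 0 hgk (by simp [hs0])] at hsum
        simpa using hsum
      have hgz : ∀ k, g k = 0 := by
        intro k
        have e := hg.int_mul (k / s) (k % s)
        rw [Int.cast_id, mul_comm, Int.emod_add_mul_ediv] at e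
        rw [e]
        have h1 : 0 ≤ k % s := Int.emod_nonneg _ (by omega)
        have h2 : k % s < s := Int.emod_lt_of_pos _ (by omega)
        obtain ⟨m, hm⟩ := Int.eq_ofNat_of_zero_le h1
        rw [hm]
        rcases eq_or_ne m 0 with rfl | hm0
        · exact hg0
        · exact hgk m (Finset.mem_range.2 (by omega)) hm0
      have hx : ∀ i j, v (.inl (i, j)) = 0 := by
        intro i j
        have := hvg i j
        rw [hgz] at this
        simpa [arr] using this
      have hc0 : v (.inr (.inl 0)) = 0 := by
        have := hρ0 ⟨v, hv'⟩ ⟨0, hs0⟩ rfl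
        rw [h] at this
        exact this.symm
      have hcd : ∀ β u, v (.inr (.inl u)) + v (.inr (.inr β)) = 0 := by
        intro β u
        have e := genForm_single_inl v β u
        have hF : halfPairing (arr v) β u = 0 := by
          simp [halfPairing, arr, hx]
        rw [hv, hF, LinearMap.zero_apply] at e
        linarith
      have hd : ∀ β, v (.inr (.inr β)) = 0 := fun β => by simpa [hc0] using hcd β 0
      ext p
      rcases p with ⟨i, j⟩ | u | β
      · exact hx i j
      · simpa [hd] using hcd 0 u
      · exact hd β
    · intro f
      -- `g` takes the prescribed values off the multiples of `s`; `g 0` makes the sum vanish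
      let f' : ℕ → ℤ := fun k => if h : k < s then f ⟨k, h⟩ else 0
      let τ : ℤ := ∑ k ∈ Finset.range S, f' (k + 1)
      let g : ℤ → ℤ := fun k => if k % s = 0 then -τ else f' (k % s).toNat
      have hg : Function.Periodic g s := by intro k; simp [g]
      have hgk : ∀ k < s, k ≠ 0 → g k = f' k := by
        intro k hk hk0
        have e : (k : ℤ) % s = k := Int.emod_eq_of_lt (by omega) (by omega)
        simp only [g, e, Int.toNat_natCast, Nat.cast_eq_zero, hk0, if_false]
      have hsum : ∑ k ∈ Finset.range s, g k = 0 := by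
        have hS' : Finset.range s = Finset.range (S + 1) := by rw [hS]
        rw [hS', Finset.sum_range_succ']
        have h1 : ∑ k ∈ Finset.range S, g (k + 1 : ℕ) = τ :=
          Finset.sum_congr rfl fun k hk => by
            rw [hgk _ (by have := Finset.mem_range.1 hk; omega) (by omega)]
        rw [h1]
        simp [g]
      obtain ⟨v, hv, harr, hk⟩ := exists_mem_ker (n := n) (r := r) g hg hsum (f ⟨0, hs0⟩)
      refine ⟨⟨v, hv⟩, ?_⟩
      ext k
      by_cases hk0 : (k : ℕ) = 0
      · rw [hρ0 _ _ hk0]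
        have : k = ⟨0, hs0⟩ := Fin.ext hk0
        rw [this]
        exact hk
      · rw [hρ1 _ _ hk0]
        have := harr ⟨k, by omega⟩ 0
        simp only [arr, Fin.val_zero, Nat.cast_zero, sub_zero] at this
        refine this.trans ?_
        rw [hgk _ k.2 hk0]
        simp [f']
  rw [(LinearEquiv.ofBijective ρ hbij).finrank_eq]
  simp

/-- The normal form of `H_P` over `Gen n r`. -/
lemma genForm_hasNormalForm (n r : ℕ) :
    ∃ g, HasNormalForm (genForm n r) (2 * (r + 1 + n) + 2 * g + Nat.gcd (n + 1) (r + 1))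
      (fun k => if k < 2 * (r + 1 + n) then 1
        else if k < 2 * (r + 1 + n) + 2 * g then 2 else 0) := by
  -- hyperbolic pairs: all column operators and all row operators but the first one
  let x : Fin (r + 1) ⊕ Fin n → Gen n r → ℤ :=
    Sum.elim (fun t => Pi.single (.inl (0, t)) 1)
      (fun α => Pi.single (.inl (α.succ, 0)) 1 - Pi.single (.inl (0, 0)) 1)
  let y : Fin (r + 1) ⊕ Fin n → Gen n r → ℤ :=
    Sum.elim (fun t => Pi.single (.inr (.inl t)) 1) (fun α => Pi.single (.inr (.inr α.succ)) 1)
  have hxy : ∀ i j, genForm n r (x i) (y j) = if i = j then 1 else 0 := by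
    rintro (t | α) (u | β) <;>
      simp [x, y, genForm, Matrix.toBilin'_single, genMatrix, eq_comm]
  have hyy : ∀ i j, genForm n r (y i) (y j) = 0 := by
    rintro (t | α) (u | β) <;> simp [y, genForm, Matrix.toBilin'_single, genMatrix]
  -- orthogonality to all `y i` means that the row and column sums vanish
  have hsums : ∀ v, (∀ i, genForm n r v (y i) = 0) →
      (∀ u, ∑ α, arr v α u = 0) ∧ ∀ i, ∑ t, arr v i t = 0 := by
    intro v hv
    have hc : ∀ u, ∑ α, arr v α u = 0 := fun u => by
      rw [← genForm_single_col]; exact hv (.inl u)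
    have hs : ∀ i : Fin n, ∑ t, arr v i.succ t = 0 := fun i => by
      rw [← genForm_single_row]; exact hv (.inr i)
    refine ⟨hc, Fin.cases ?_ hs⟩
    have h : ∑ i, ∑ t, arr v i t = 0 := by
      rw [Finset.sum_comm]; simp [hc]
    rw [Fin.sum_univ_succ] at h
    simpa [hs] using h
  have heven : ∀ v w, (∀ i, genForm n r v (y i) = 0) → (∀ i, genForm n r w (y i) = 0) →
      2 ∣ genForm n r v w := by
    intro v w hv hw
    obtain ⟨v1, v2⟩ := hsums v hv
    obtain ⟨w1, w2⟩ := hsums w hw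
    rw [genForm_apply]
    simp only [v1, v2, zero_mul, Finset.sum_const_zero, add_zero, sub_mul, Finset.sum_sub_distrib]
    have e1 : ∑ β, ∑ u, v (.inr (.inl u)) * w (.inl (β, u)) = 0 := by
      rw [Finset.sum_comm]
      refine Finset.sum_eq_zero fun u _ => ?_
      rw [← Finset.mul_sum]
      exact mul_eq_zero_of_right _ (w1 u)
    have e2 : ∑ β, ∑ u, v (.inr (.inr β)) * w (.inl (β, u)) = 0 := by
      refine Finset.sum_eq_zero fun β _ => ?_
      rw [← Finset.mul_sum]
      exact mul_eq_zero_of_right _ (w2 β)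
    rw [e1, e2, sub_zero, sub_zero]
    exact Finset.dvd_sum fun β _ => Finset.dvd_sum fun u _ =>
      (Dvd.intro _ rfl : (2 : ℤ) ∣ 2 * _).mul_right _
  let e : Fin (r + 1 + n) ≃ Fin (r + 1) ⊕ Fin n := finSumFinEquiv.symm
  have := hasNormalForm_of_family (r + 1 + n) (Gen n r → ℤ) (genForm n r) (x ∘ e) (y ∘ e)
    genForm_self (fun i j => by simp [hxy]) (fun i j => hyy _ _)
    (fun v w hv hw => heven v w (fun i => by simpa using hv (e.symm i))
      (fun i => by simpa using hw (e.symm i))) genForm_divisorsDvdTwo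
  rwa [finrank_ker_genForm] at this

end Form

/-! ### From bases to matrices -/

/-- Passage from a basis to a matrix of determinant one: when the last basis vector is in the
radical, its sign can be changed freely. -/
lemma HasNormalForm.exists_matrix {ι : Type} [Fintype ι] [DecidableEq ι] {A : Matrix ι ι ℤ} {N : ℕ}
    {w : ℕ → ℤ} (h : HasNormalForm (Matrix.toBilin' A) N w) (hN : 0 < N)
    (hw : ∀ k, Even k → N ≤ k + 2 → w k = 0) (e : Fin N ≃ ι) :
    ∃ U : Matrix (Fin N) (Fin N) ℤ, U.det = 1 ∧
      ∀ a b : Fin N, (U * A.submatrix e e * Uᵀ) a b =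
        if (a : ℕ) + 1 = (b : ℕ) ∧ Even (a : ℕ) then w (a : ℕ)
        else if (b : ℕ) + 1 = (a : ℕ) ∧ Even (b : ℕ) then -w (b : ℕ)
        else 0 := by
  obtain ⟨b, hb⟩ := h
  let b' : Module.Basis (Fin N) ℤ (Fin N → ℤ) := b.map (LinearEquiv.funCongrLeft ℤ ℤ e)
  let U : Matrix (Fin N) (Fin N) ℤ := Matrix.of fun a j => b a (e j)
  have hU : IsUnit U.det := by
    have h := (Pi.basisFun ℤ (Fin N)).isUnit_det b'
    rw [Module.Basis.det_apply, ← Matrix.det_transpose] at h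
    exact h
  have hUA : ∀ i j : Fin N, (U * A.submatrix e e * Uᵀ) i j = Matrix.toBilin' A (b i) (b j) := by
    intro i j
    rw [Matrix.toBilin'_apply', Matrix.dotProduct_mulVec]
    simp only [Matrix.mul_apply, Matrix.transpose_apply, dotProduct, Matrix.vecMul,
      Matrix.submatrix_apply, U, Matrix.of_apply]
    rw [← e.sum_comp]
    refine Finset.sum_congr rfl fun k _ => ?_
    rw [← e.sum_comp]
  let last : Fin N := ⟨N - 1, by omega⟩
  let d : Fin N → ℤ := fun i => if i = last then U.det else 1
  have hdd : U.det * U.det = 1 := Int.isUnit_mul_self hU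
  refine ⟨Matrix.diagonal d * U, ?_, fun i j => ?_⟩
  · rw [Matrix.det_mul, Matrix.det_diagonal, Finset.prod_ite_eq' Finset.univ last]
    simpa using hdd
  · have e1 : Matrix.diagonal d * U * A.submatrix e e * (Matrix.diagonal d * U)ᵀ =
        Matrix.diagonal d * (U * A.submatrix e e * Uᵀ) * Matrix.diagonal d := by
      rw [Matrix.transpose_mul, Matrix.diagonal_transpose]
      simp only [Matrix.mul_assoc]
    rw [e1, Matrix.mul_diagonal, Matrix.diagonal_mul, hUA, hb]
    have hi := i.2
    have hj := j.2
    have hd : ∀ k : Fin N, (k : ℕ) + 1 < N → d k = 1 := by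
      intro k hk
      have : k ≠ last := fun h => by
        rw [h] at hk
        simp only [last] at hk
        omega
      simp [d, this]
    split_ifs with h1 h2
    · by_cases hl : (i : ℕ) + 2 < N
      · rw [hd i (by omega), hd j (by omega), one_mul, mul_one]
      · rw [hw i h1.2 (by omega), mul_zero, zero_mul]
    · by_cases hl : (j : ℕ) + 2 < N
      · rw [hd i (by omega), hd j (by omega), one_mul, mul_one]
      · rw [hw j h2.2 (by omega), neg_zero, mul_zero, zero_mul]
    · rw [mul_zero, zero_mul]

/-- The enumeration of the generators: matrix generators in lexicographic order, then column
operators, then row operators. -/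
def genEquiv (n r : ℕ) : Fin ((n + 1) * (r + 1) + (r + 1) + (n + 1)) ≃ Gen n r :=
  (finSumFinEquiv.symm.trans ((finSumFinEquiv.symm.trans
    (finProdFinEquiv.symm.sumCongr (Equiv.refl _))).sumCongr (Equiv.refl _))).trans
    (Equiv.sumAssoc _ _ _)

lemma genEquiv_symm_inl {n r : ℕ} (α : Fin (n + 1)) (t : Fin (r + 1)) :
    (((genEquiv n r).symm (.inl (α, t)) : Fin _) : ℕ) = t + (r + 1) * α := by
  simp [genEquiv]

lemma genEquiv_symm_col {n r : ℕ} (u : Fin (r + 1)) :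
    (((genEquiv n r).symm (.inr (.inl u)) : Fin _) : ℕ) = (n + 1) * (r + 1) + u := by
  simp [genEquiv]

lemma genEquiv_symm_row {n r : ℕ} (i : Fin (n + 1)) :
    (((genEquiv n r).symm (.inr (.inr i)) : Fin _) : ℕ) = (n + 1) * (r + 1) + (r + 1) + i := by
  simp [genEquiv]

/-- block diagonal form of the defining matrix `H_P` of the
extended algebra `P_q(n,r)` (in a Dipper–Donkin basis). `H_P` is given in
scalar form over `Fin (n*r + r + n)`: indices `a < n*r` encode the matrix
generators (block index `a / r`, in-block index `a % r`), indices
`n*r ≤ a < n*r + r` the column operators, and indices `a ≥ n*r + r` the row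
operators. The conclusion: `(n-1)(r-1) - s + 1` is even (`s = gcd(n,r)`), and
there is an integer `U` of determinant 1 with `U·H_P·Uᵗ` block diagonal with
`n+r-1` consecutive 2×2 blocks `[[0,1],[-1,0]]`, then
`((n-1)(r-1)-s+1)/2` blocks `[[0,2],[-2,0]]`, and zeros beyond
(the `(s+1)×(s+1)` zero block). -/
theorem stmt_19 (n r : ℕ) (hn : 2 ≤ n) (hr : 2 ≤ r)
    (H : Matrix (Fin (n * r + r + n)) (Fin (n * r + r + n)) ℤ)
    (hH : ∀ a b : Fin (n * r + r + n), H a b =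
      if (a : ℕ) < n * r ∧ (b : ℕ) < n * r then
        (if (a : ℕ) / r = (b : ℕ) / r then 0
         else if (a : ℕ) / r < (b : ℕ) / r then
           (if (b : ℕ) % r ≤ (a : ℕ) % r then 2 else 0)
         else (if (a : ℕ) % r ≤ (b : ℕ) % r then -2 else 0))
      else if (a : ℕ) < n * r ∧ (b : ℕ) < n * r + r then
        (if (a : ℕ) % r = (b : ℕ) - n * r then 1 else 0)
      else if (a : ℕ) < n * r then
        (if (b : ℕ) - (n * r + r) = (a : ℕ) / r then 1 else 0)
      else if (a : ℕ) < n * r + r ∧ (b : ℕ) < n * r then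
        (if (a : ℕ) - n * r = (b : ℕ) % r then -1 else 0)
      else if n * r + r ≤ (a : ℕ) ∧ (b : ℕ) < n * r then
        (if (a : ℕ) - (n * r + r) = (b : ℕ) / r then -1 else 0)
      else 0)
    (w : ℕ → ℤ)
    (hw : ∀ k : ℕ, w k =
      if k < 2 * (n + r - 1) then 1
      else if (k : ℤ) < 2 * ((n : ℤ) + (r : ℤ) - 1) +
          (((n : ℤ) - 1) * ((r : ℤ) - 1) - (Nat.gcd n r : ℤ) + 1) then 2
      else 0) :
    Even (((n : ℤ) - 1) * ((r : ℤ) - 1) - (Nat.gcd n r : ℤ) + 1) ∧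
    ∃ U : Matrix (Fin (n * r + r + n)) (Fin (n * r + r + n)) ℤ,
      U.det = 1 ∧
      ∀ a b : Fin (n * r + r + n), (U * H * Uᵀ) a b =
        if (a : ℕ) + 1 = (b : ℕ) ∧ Even (a : ℕ) then w (a : ℕ)
        else if (b : ℕ) + 1 = (a : ℕ) ∧ Even (b : ℕ) then -w (b : ℕ)
        else 0 := by
  obtain ⟨n, rfl⟩ : ∃ m, n = m + 1 := ⟨n - 1, by omega⟩
  obtain ⟨r, rfl⟩ : ∃ m, r = m + 1 := ⟨r - 1, by omega⟩
  obtain ⟨g, hg⟩ := genForm_hasNormalForm n r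
  have hs : 0 < Nat.gcd (n + 1) (r + 1) := Nat.gcd_pos_of_pos_left _ (Nat.succ_pos n)
  -- comparing ranks computes `g`
  have hcard : 2 * (r + 1 + n) + 2 * g + Nat.gcd (n + 1) (r + 1) =
      (n + 1) * (r + 1) + (r + 1) + (n + 1) := by
    obtain ⟨b, -⟩ := hg
    have h := Module.finrank_eq_card_basis b
    rw [Module.finrank_fintype_fun_eq_card, Fintype.card_fin, ← Fintype.card_congr (genEquiv n r),
      Fintype.card_fin] at h
    exact h.symm
  have hg2 : (((n + 1 : ℕ) : ℤ) - 1) * (((r + 1 : ℕ) : ℤ) - 1) -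
      (Nat.gcd (n + 1) (r + 1) : ℤ) + 1 = 2 * g := by
    have h : (2 * (r + 1 + n) + 2 * g + Nat.gcd (n + 1) (r + 1) : ℤ) =
      (n + 1) * (r + 1) + (r + 1) + (n + 1) := by exact_mod_cast hcard
    push_cast
    linarith
  have hw' : w = fun k => if k < 2 * (r + 1 + n) then 1
      else if k < 2 * (r + 1 + n) + 2 * g then 2 else 0 := by
    funext k
    rw [hw k, hg2]
    have h1 : k < 2 * (n + 1 + (r + 1) - 1) ↔ k < 2 * (r + 1 + n) := by omega
    have h2 : (k : ℤ) < 2 * (((n + 1 : ℕ) : ℤ) + ((r + 1 : ℕ) : ℤ) - 1) + 2 * g ↔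
        k < 2 * (r + 1 + n) + 2 * g := by omega
    simp only [h1, h2]
  refine ⟨⟨g, by rw [hg2]; ring⟩, ?_⟩
  have hHA : H = (genMatrix n r).submatrix (genEquiv n r) (genEquiv n r) := by
    have key : ∀ p q, H ((genEquiv n r).symm p) ((genEquiv n r).symm q) = genMatrix n r p q := by
      intro p q
      have hlt : ∀ (α : Fin (n + 1)) (t : Fin (r + 1)),
          (t : ℕ) + (r + 1) * α < (n + 1) * (r + 1) := fun α t => by
        have := α.2
        have := t.2
        nlinarith
      have hdiv : ∀ (α : Fin (n + 1)) (t : Fin (r + 1)), ((t : ℕ) + (r + 1) * α) / (r + 1) = α :=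
        fun α t => by
          rw [Nat.add_mul_div_left _ _ (Nat.succ_pos r), Nat.div_eq_of_lt t.2, zero_add]
      have hmod : ∀ (α : Fin (n + 1)) (t : Fin (r + 1)), ((t : ℕ) + (r + 1) * α) % (r + 1) = t :=
        fun α t => by
          rw [Nat.add_mul_mod_self_left, Nat.mod_eq_of_lt t.2]
      rw [hH]
      rcases p with ⟨α, t⟩ | u | i <;> rcases q with ⟨β, t'⟩ | u' | i' <;>
        simp only [genEquiv_symm_inl, genEquiv_symm_col, genEquiv_symm_row, hlt, hdiv, hmod,
          genMatrix, Fin.ext_iff, Fin.lt_def, Fin.le_def, and_self,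
          true_and, and_true, if_true]
      all_goals
        generalize (n + 1) * (r + 1) = M
        split_ifs <;> first | rfl | omega
    ext a b
    simpa using key (genEquiv n r a) (genEquiv n r b)
  subst hHA hw'
  rw [hcard] at hg
  refine hg.exists_matrix (by omega) (fun k hk hkN => ?_) (genEquiv n r)
  -- `k ≥ N - 2` is even and the radical has positive rank
  obtain ⟨l, rfl⟩ := hk
  rw [if_neg (by omega), if_neg (by omega)]
end
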